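/- arXiv:2505.06596 — 2 statements merged into one kernel-verified Lean document; each statement's English description precedes it below -/
import Mathlib

section
/- Let G be a connected simple graph on a vertex set V, let r be a fixed root vertex, and define k(v) = dist(r,v) mod 3 for every vertex v. Then for every vertex v, the classification of its neighborhood by ranks coincides with the classification by exact distances: {u ∈ N(v) : (k(u)+1) mod 3 = k(v)} = {u ∈ N(v) : dist(r,u) + 1 = dist(r,v)} (parents), {u ∈ N(v) : k(u) = k(v)} = {u ∈ N(v) : dist(r,u) = dist(r,v)} (siblings), and {u ∈ N(v) : (k(v)+1) mod 3 = k(u)} = {u ∈ N(v) : dist(r,v) + 1 = dist(r,u)} (children). -/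
/-- The classification of a vertex's neighborhood by ranks (distance to the root
modulo 3) coincides with the classification by exact distances: parents, siblings
and children are correctly identified from the ranks alone. -/
theorem rank_classification {V : Type*} (G : SimpleGraph V) (hG : G.Connected)
    (r : V) (k : V → ℕ) (hk : ∀ v, k v = G.dist r v % 3) (v : V) :
    ({u ∈ G.neighborSet v | (k u + 1) % 3 = k v}
        = {u ∈ G.neighborSet v | G.dist r u + 1 = G.dist r v}) ∧
    ({u ∈ G.neighborSet v | k u = k v}
        = {u ∈ G.neighborSet v | G.dist r u = G.dist r v}) ∧
    ({u ∈ G.neighborSet v | (k v + 1) % 3 = k u}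
        = {u ∈ G.neighborSet v | G.dist r v + 1 = G.dist r u}) := by
  -- Distances to `r` of adjacent vertices differ by at most one, and the differences
  -- `-1, 0, 1` are distinct modulo 3.
  have h : ∀ u, G.Adj v u → G.dist r u ≤ G.dist r v + 1 ∧ G.dist r v ≤ G.dist r u + 1 := by
    intro u hu
    have h₁ : G.dist r u ≤ G.dist r v + G.dist v u := hG.dist_triangle
    have h₂ : G.dist r v ≤ G.dist r u + G.dist u v := hG.dist_triangle
    rw [SimpleGraph.dist_eq_one_iff_adj.mpr hu] at h₁
    rw [SimpleGraph.dist_eq_one_iff_adj.mpr hu.symm] at h₂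
    exact ⟨h₁, h₂⟩
  refine ⟨?_, ?_, ?_⟩ <;>
  · ext u
    simp only [Set.mem_ofPred_eq, SimpleGraph.mem_neighborSet, hk]
    refine and_congr_right fun hu => ?_
    have := h u hu
    omega
end

section
/- Let G be a connected simple graph on a vertex set V and let r be a fixed root vertex. There is no closed walk v₀, v₁, …, v_m (with m ≥ 1 and v_m = v₀) in G such that for every i < m, v_i and v_{i+1} are adjacent and dist(r, v_{i+1}) ≡ dist(r, v_i) + 1 (mod 3). In other words, when every node's rank equals its distance to the root modulo 3, the parent-child relation (child rank = parent rank + 1 mod 3) induces no cycles. -/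
/-- When every node's rank equals its distance to the root modulo 3, the
parent-child relation (child rank = parent rank + 1 mod 3) induces no cycles:
there is no closed walk along which the distance to the root always increases
by 1 modulo 3. -/
theorem no_rank_cycle {V : Type*} (G : SimpleGraph V) (hG : G.Connected)
    (r : V) :
    ¬ ∃ (m : ℕ) (w : ℕ → V), 1 ≤ m ∧ w m = w 0 ∧
      ∀ i < m, G.Adj (w i) (w (i + 1)) ∧
        G.dist r (w (i + 1)) % 3 = (G.dist r (w i) + 1) % 3 := by
  rintro ⟨m, w, hm, hclosed, hstep⟩
  -- Adjacent vertices have distances to `r` differing by at most 1, so the congruence mod 3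
  -- forces the distance to grow by exactly 1 at each step.
  have hdist : ∀ i ≤ m, G.dist r (w i) = G.dist r (w 0) + i := by
    intro i
    induction i with
    | zero => simp
    | succ k ih =>
      intro hk
      obtain ⟨hadj, hmod⟩ := hstep k hk
      have hprev := ih (by omega)
      have hdiff := hadj.diff_dist_adj (u := r)
      omega
  have hend := hdist m le_rfl
  rw [hclosed] at hend
  omega
end
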